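/- arXiv:1008.2646 — 3 statements merged into one kernel-verified Lean document; each statement's English description precedes it below -/
import Mathlib

section
/- Let e₀, …, e_k ∈ 𝓞_K^{n+1} satisfy B(e_i, e_i) > 0 for all i and, for all i ≠ j, B(e_i, e_j)² ≥ B(e_i, e_i)·B(e_j, e_j) with e_i not a K-scalar multiple of e_j (so the hyperbolic hyperplanes they define are pairwise disjoint). Then there exists a finite-index subgroup Γ' of O_F(𝓞_K) such that for every h ∈ Γ', either h·e₀ is a K-scalar multiple of e₀, or for every i ∈ {0, …, k} one has B(h·e₀, e_i)² ≥ B(h·e₀, h·e₀)·B(e_i, e_i) and h·e₀ is not a K-scalar multiple of e_i (i.e. h maps the hyperplane defined by e₀ either to itself or to a hyperplane disjoint from all the given ones). -/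
open scoped Matrix

noncomputable section

/-- The bilinear form `B(u,v) = uᵀ F v` associated to a matrix `F`. -/
def bilinForm {m : ℕ} {R : Type*} [CommRing R] (F : Matrix (Fin m) (Fin m) R)
    (u v : Fin m → R) : R :=
  dotProduct u (F.mulVec v)

/-- The orthogonal group of the bilinear form with matrix `F`, as a subgroup of `GL`. -/
def orthogonalSubgroup {m : ℕ} {R : Type*} [CommRing R] (F : Matrix (Fin m) (Fin m) R) :
    Subgroup (GL (Fin m) R) where
  carrier := {h | ((h : Matrix (Fin m) (Fin m) R))ᵀ * F * (h : Matrix (Fin m) (Fin m) R) = F}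
  one_mem' := by simp
  mul_mem' := by
    intro a b ha hb
    simp only [Set.mem_setOf_eq, Units.val_mul, Matrix.transpose_mul] at *
    calc (b : Matrix (Fin m) (Fin m) R)ᵀ * (a : Matrix (Fin m) (Fin m) R)ᵀ * F *
          ((a : Matrix (Fin m) (Fin m) R) * (b : Matrix (Fin m) (Fin m) R))
        = (b : Matrix (Fin m) (Fin m) R)ᵀ *
            ((a : Matrix (Fin m) (Fin m) R)ᵀ * F * (a : Matrix (Fin m) (Fin m) R)) *
            (b : Matrix (Fin m) (Fin m) R) := by
          simp only [Matrix.mul_assoc]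
      _ = F := by rw [ha]; exact hb
  inv_mem' := by
    intro a ha
    simp only [Set.mem_setOf_eq] at *
    have h1 : (a : Matrix (Fin m) (Fin m) R) *
        ((a⁻¹ : GL (Fin m) R) : Matrix (Fin m) (Fin m) R) = 1 := by
      rw [← Units.val_mul, mul_inv_cancel, Units.val_one]
    calc ((a⁻¹ : GL (Fin m) R) : Matrix (Fin m) (Fin m) R)ᵀ * F *
          ((a⁻¹ : GL (Fin m) R) : Matrix (Fin m) (Fin m) R)
        = ((a⁻¹ : GL (Fin m) R) : Matrix (Fin m) (Fin m) R)ᵀ *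
            ((a : Matrix (Fin m) (Fin m) R)ᵀ * F * (a : Matrix (Fin m) (Fin m) R)) *
            ((a⁻¹ : GL (Fin m) R) : Matrix (Fin m) (Fin m) R) := by rw [ha]
      _ = ((a : Matrix (Fin m) (Fin m) R) *
            ((a⁻¹ : GL (Fin m) R) : Matrix (Fin m) (Fin m) R))ᵀ * F *
            ((a : Matrix (Fin m) (Fin m) R) *
              ((a⁻¹ : GL (Fin m) R) : Matrix (Fin m) (Fin m) R)) := by
          simp only [Matrix.transpose_mul, Matrix.mul_assoc]
      _ = F := by rw [h1]; simp

/-- The real embedding of `𝓞 K` induced by a real embedding `σ` of `K`. -/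
def embOK {K : Type*} [Field K] [NumberField K] (σ : K →+* ℝ) :
    NumberField.RingOfIntegers K →+* ℝ :=
  σ.comp (algebraMap (NumberField.RingOfIntegers K) K)

/-- `u` is a `K`-scalar multiple of `v` (both viewed as vectors in `K^m`). -/
def IsKScalarMultiple {K : Type*} [Field K] [NumberField K] {m : ℕ}
    (u v : Fin m → NumberField.RingOfIntegers K) : Prop :=
  ∃ c : K, (fun t => algebraMap (NumberField.RingOfIntegers K) K (u t)) =
    c • (fun t => algebraMap (NumberField.RingOfIntegers K) K (v t))

/-!
Take for `Γ'` a deep principal congruence subgroup.  If `h ≡ 1 mod N`, then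
`B(h v, w) ≡ B(v, w) mod N`.  Should the hyperplanes of `h v` and `w` cross, then
`B(h v, w)² ≤ B(v, v) B(w, w)` at the distinguished place, while at every other place this is
Cauchy–Schwarz; so `B(h v, w)` lies in a box that does not depend on `N`.  A nonzero algebraic
integer divisible by `N` has absolute value at least `N` at some place, hence for `N` large
`B(h v, w) = B(v, w)`, and the hyperplanes of `v` and `w` cross as well.  Applied to the `2 × 2`
minors of `(v, w)`, which are congruent to those of `(h v, w)`, the same principle shows that
`h v ∥ w` forces `v ∥ w`.
-/

section Forms

variable {m : ℕ} {R S : Type*} [CommRing R] [CommRing S]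

lemma map_bilinForm (f : R →+* S) (F : Matrix (Fin m) (Fin m) R) (u v : Fin m → R) :
    f (bilinForm F u v) = bilinForm (F.map f) (f ∘ u) (f ∘ v) := by
  simp only [bilinForm, RingHom.map_dotProduct, funext (RingHom.map_mulVec f F v),
    Function.comp_def]

lemma bilinForm_mulVec_mulVec (F : Matrix (Fin m) (Fin m) R) (h : orthogonalSubgroup F)
    (u v : Fin m → R) :
    bilinForm F ((h : GL (Fin m) R).val.mulVec u) ((h : GL (Fin m) R).val.mulVec v) =
      bilinForm F u v := by
  have hF : (h : GL (Fin m) R).valᵀ * F * (h : GL (Fin m) R).val = F := h.2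
  unfold bilinForm
  conv_rhs => rw [← hF]
  rw [← Matrix.mulVec_mulVec, ← Matrix.mulVec_mulVec, Matrix.dotProduct_mulVec u,
    Matrix.vecMul_transpose]

lemma dvd_bilinForm_sub_bilinForm (F : Matrix (Fin m) (Fin m) R) {a : R} {u v : Fin m → R}
    (huv : ∀ t, a ∣ u t - v t) (w : Fin m → R) :
    a ∣ bilinForm F u w - bilinForm F v w := by
  unfold bilinForm
  rw [← sub_dotProduct]
  exact Finset.dvd_sum fun t _ => (huv t).mul_right _

lemma bilinForm_sq_le_of_posSemidef {M : Matrix (Fin m) (Fin m) ℝ} (hM : M.PosSemidef)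
    (u v : Fin m → ℝ) :
    bilinForm M u v ^ 2 ≤ bilinForm M u u * bilinForm M v v := by
  have hnonneg : ∀ x, 0 ≤ Matrix.toLinearMap₂' ℝ M x x := fun x => by
    rw [Matrix.toLinearMap₂'_apply']
    exact hM.dotProduct_mulVec_nonneg x
  have hsymm : bilinForm M v u = bilinForm M u v := by
    have hMT : Mᵀ = M := Matrix.isHermitian_iff_isSymm.mp hM.isHermitian
    unfold bilinForm
    rw [Matrix.dotProduct_mulVec, ← Matrix.mulVec_transpose, hMT, dotProduct_comm]
  calc bilinForm M u v ^ 2 = bilinForm M u v * bilinForm M v u := by rw [hsymm, sq]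
    _ ≤ bilinForm M u u * bilinForm M v v := by
      simpa only [Matrix.toLinearMap₂'_apply', bilinForm] using
        LinearMap.BilinForm.apply_mul_apply_le_of_forall_zero_le _ hnonneg u v

/-- The hyperplanes defined by `u` and `v` do not cross, that is, they are disjoint or equal, with
respect to the form `B` of matrix `F` viewed over `ℝ` through `σ`.  The geometric meaning supposes
`σ (B(u,u))` and `σ (B(v,v))` positive and `σ F` of signature `(m - 1, 1)`. -/
def DisjointOrEqual (σ : R →+* ℝ) (F : Matrix (Fin m) (Fin m) R) (u v : Fin m → R) : Prop :=
  σ (bilinForm F u u) * σ (bilinForm F v v) ≤ σ (bilinForm F u v) ^ 2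

end Forms

section CongruenceSubgroup

variable {n : Type*} [Fintype n] [DecidableEq n] {R : Type*} [CommRing R]

/-- The principal congruence subgroup of level `I` in `GL n R`: the matrices congruent to the
identity modulo `I`. -/
def principalCongruenceSubgroup (n : Type*) [Fintype n] [DecidableEq n] (I : Ideal R) :
    Subgroup (GL n R) :=
  (Matrix.GeneralLinearGroup.map (Ideal.Quotient.mk I)).ker

lemma finiteIndex_principalCongruenceSubgroup (I : Ideal R) [Finite (R ⧸ I)] :
    (principalCongruenceSubgroup n I).FiniteIndex :=
  Subgroup.finiteIndex_ker _

lemma mulVec_sub_mem_of_mem_principalCongruenceSubgroup {I : Ideal R} {g : GL n R}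
    (hg : g ∈ principalCongruenceSubgroup n I) (v : n → R) (t : n) :
    g.val.mulVec v t - v t ∈ I := by
  have hmap : g.val.map (Ideal.Quotient.mk I) = 1 := congrArg Units.val (MonoidHom.mem_ker.mp hg)
  rw [← Ideal.Quotient.eq, RingHom.map_mulVec, hmap, Matrix.one_mulVec, Function.comp_apply]

end CongruenceSubgroup

section LargeLevel

open Filter NumberField

lemma isTotallyReal_of_forall_embedding_factors {K : Type*} [Field K]
    (h : ∀ φ : K →+* ℂ, ∃ σ : K →+* ℝ, φ = Complex.ofRealHom.comp σ) : IsTotallyReal K where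
  isReal p := by
    obtain ⟨σ, hσ⟩ := h p.embedding
    rw [InfinitePlace.isReal_iff, ComplexEmbedding.isReal_iff, hσ]
    ext x
    simp

variable {K : Type*} [Field K] [NumberField K] {m : ℕ}

lemma finite_quotient_span_natCast {N : ℕ} (hN : N ≠ 0) :
    Finite (𝓞 K ⧸ Ideal.span {(N : 𝓞 K)}) :=
  Ideal.finiteQuotientOfFreeOfNeBot _ <| by
    simpa only [ne_eq, Ideal.span_singleton_eq_bot, Nat.cast_eq_zero] using hN

lemma eq_zero_of_natCast_dvd_of_forall_infinitePlace_lt {N : ℕ} {x : 𝓞 K} (hdvd : (N : 𝓞 K) ∣ x)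
    (hlt : ∀ p : InfinitePlace K, p x < N) : x = 0 := by
  obtain ⟨y, rfl⟩ := hdvd
  have hy (p : InfinitePlace K) : p y < 1 := by
    have hp : (N : ℝ) * p y < N := by simpa using hlt p
    by_contra! hge
    exact absurd hp (not_lt.mpr (le_mul_of_one_le_right N.cast_nonneg hge))
  suffices y = 0 by rw [this, mul_zero]
  by_contra hne
  let p : InfinitePlace K := Classical.arbitrary _
  exact (hy p).not_ge (InfinitePlace.one_le_of_lt_one hne fun q _ => hy q)

lemma eventually_eq_of_natCast_dvd_sub (b : 𝓞 K) (C : InfinitePlace K → ℝ) :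
    ∀ᶠ N : ℕ in atTop, ∀ x : 𝓞 K, (N : 𝓞 K) ∣ x - b → (∀ p : InfinitePlace K, p x ≤ C p) →
      x = b := by
  have hbox : ∀ᶠ N : ℕ in atTop, ∀ p : InfinitePlace K, C p + p b < N :=
    eventually_all.2 fun p => tendsto_natCast_atTop_atTop.eventually_gt_atTop _
  filter_upwards [hbox] with N hN x hdvd hx
  refine sub_eq_zero.mp <| eq_zero_of_natCast_dvd_of_forall_infinitePlace_lt hdvd fun p => ?_
  calc p ((x - b : 𝓞 K) : K) ≤ p x + p b := p.1.sub_le_add x b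
    _ ≤ C p + p b := by gcongr; exact hx p
    _ < N := hN p

lemma eventually_eq_zero_of_natCast_dvd (x : 𝓞 K) :
    ∀ᶠ N : ℕ in atTop, (N : 𝓞 K) ∣ x → x = 0 := by
  filter_upwards [eventually_eq_of_natCast_dvd_sub 0 fun p : InfinitePlace K => p x] with N hN hdvd
  exact hN x (by rwa [sub_zero]) fun _ => le_rfl

lemma isKScalarMultiple_zero_right {u : Fin m → 𝓞 K} : IsKScalarMultiple u 0 ↔ u = 0 := by
  simp [IsKScalarMultiple, funext_iff]

lemma isKScalarMultiple_iff_minors {w : Fin m → 𝓞 K} (hw : w ≠ 0) (u : Fin m → 𝓞 K) :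
    IsKScalarMultiple u w ↔ ∀ s t, u s * w t = u t * w s := by
  constructor
  · rintro ⟨c, hc⟩ s t
    apply RingOfIntegers.coe_injective
    have hcs := congrFun hc s
    have hct := congrFun hc t
    simp only [Pi.smul_apply, smul_eq_mul] at hcs hct
    rw [map_mul, map_mul, hcs, hct]
    ring
  · intro hminor
    obtain ⟨s, hs⟩ := Function.ne_iff.mp hw
    have hs' : algebraMap (𝓞 K) K (w s) ≠ 0 := RingOfIntegers.coe_ne_zero_iff.mpr hs
    refine ⟨algebraMap (𝓞 K) K (u s) / algebraMap (𝓞 K) K (w s), funext fun t => ?_⟩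
    rw [Pi.smul_apply, smul_eq_mul, div_mul_eq_mul_div, eq_div_iff hs', ← map_mul, ← map_mul,
      hminor s t]

lemma eventually_isKScalarMultiple_of_congr (v w : Fin m → 𝓞 K) :
    ∀ᶠ N : ℕ in atTop, ∀ u : Fin m → 𝓞 K, (∀ t, (N : 𝓞 K) ∣ u t - v t) →
      IsKScalarMultiple u w → IsKScalarMultiple v w := by
  rcases eq_or_ne w 0 with rfl | hw
  · simp only [isKScalarMultiple_zero_right]
    filter_upwards [eventually_all.2 fun t => eventually_eq_zero_of_natCast_dvd (v t)]
      with N hN u huv hu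
    exact funext fun t => hN t (by simpa [hu] using huv t)
  · simp only [isKScalarMultiple_iff_minors hw]
    filter_upwards [eventually_all.2 fun s => eventually_all.2 fun t =>
      eventually_eq_zero_of_natCast_dvd (v s * w t - v t * w s)] with N hN u huv hu s t
    have hminor : v s * w t - v t * w s = (u t - v t) * w s - (u s - v s) * w t := by
      linear_combination hu s t
    refine sub_eq_zero.mp (hN s t ?_)
    rw [hminor]
    exact dvd_sub ((huv t).mul_right _) ((huv s).mul_right _)

lemma eventually_bilinForm_eq_or_lt_of_congr [IsTotallyReal K] (σ₁ : K →+* ℝ)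
    (F : Matrix (Fin m) (Fin m) (𝓞 K))
    (hF : ∀ σ : K →+* ℝ, σ ≠ σ₁ → (F.map (embOK σ)).PosSemidef) (v w : Fin m → 𝓞 K) :
    ∀ᶠ N : ℕ in atTop, ∀ u : Fin m → 𝓞 K, (∀ t, (N : 𝓞 K) ∣ u t - v t) →
      bilinForm F u u = bilinForm F v v →
      bilinForm F u w = bilinForm F v w ∨
        embOK σ₁ (bilinForm F u u) * embOK σ₁ (bilinForm F w w) <
          embOK σ₁ (bilinForm F u w) ^ 2 := by
  let C (p : InfinitePlace K) : ℝ := √(p (bilinForm F v v * bilinForm F w w : 𝓞 K))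
  filter_upwards [eventually_eq_of_natCast_dvd_sub (bilinForm F v w) C] with N hN u huv hnorm
  refine or_iff_not_imp_right.mpr fun hle => ?_
  have hbound (σ : K →+* ℝ) : embOK σ (bilinForm F u w) ^ 2 ≤
      embOK σ (bilinForm F u u) * embOK σ (bilinForm F w w) := by
    rcases eq_or_ne σ σ₁ with rfl | hσ
    · exact not_lt.mp hle
    · simpa only [map_bilinForm] using bilinForm_sq_le_of_posSemidef (hF σ hσ) _ _
  refine hN _ (dvd_bilinForm_sub_bilinForm F huv w) fun p => Real.le_sqrt_of_sq_le ?_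
  let σ : K →+* ℝ := InfinitePlace.embedding_of_isReal (IsTotallyReal.isReal p)
  have hp (x : 𝓞 K) : p x = |embOK σ x| :=
    (InfinitePlace.norm_embedding_of_isReal (IsTotallyReal.isReal p) (x : K)).symm
  calc p (bilinForm F u w : 𝓞 K) ^ 2 = embOK σ (bilinForm F u w) ^ 2 := by rw [hp, sq_abs]
    _ ≤ embOK σ (bilinForm F v v * bilinForm F w w) := by rw [map_mul, ← hnorm]; exact hbound σ
    _ ≤ p (bilinForm F v v * bilinForm F w w : 𝓞 K) := by rw [hp]; exact le_abs_self _

lemma eventually_disjointOrEqual_of_congr [IsTotallyReal K] (σ₁ : K →+* ℝ)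
    (F : Matrix (Fin m) (Fin m) (𝓞 K))
    (hF : ∀ σ : K →+* ℝ, σ ≠ σ₁ → (F.map (embOK σ)).PosSemidef) {v w : Fin m → 𝓞 K}
    (hvw : DisjointOrEqual (embOK σ₁) F v w) :
    ∀ᶠ N : ℕ in atTop, ∀ u : Fin m → 𝓞 K, (∀ t, (N : 𝓞 K) ∣ u t - v t) →
      bilinForm F u u = bilinForm F v v → DisjointOrEqual (embOK σ₁) F u w := by
  filter_upwards [eventually_bilinForm_eq_or_lt_of_congr σ₁ F hF v w] with N hN u huv hnorm
  rcases hN u huv hnorm with heq | hlt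
  · unfold DisjointOrEqual
    rwa [hnorm, heq]
  · exact hlt.le

theorem generalized_margulis_vinberg_general [IsTotallyReal K] (σ₁ : K →+* ℝ)
    (F : Matrix (Fin m) (Fin m) (𝓞 K))
    (hF : ∀ σ : K →+* ℝ, σ ≠ σ₁ → (F.map (embOK σ)).PosSemidef)
    {ι : Type*} [Finite ι] (v : Fin m → 𝓞 K) (e : ι → Fin m → 𝓞 K)
    (hdisj : ∀ i, DisjointOrEqual (embOK σ₁) F v (e i)) :
    ∃ Γ' : Subgroup (orthogonalSubgroup F), Γ'.FiniteIndex ∧ ∀ h ∈ Γ', ∀ i,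
      DisjointOrEqual (embOK σ₁) F ((h : GL (Fin m) (𝓞 K)).val.mulVec v) (e i) ∧
        (IsKScalarMultiple ((h : GL (Fin m) (𝓞 K)).val.mulVec v) (e i) →
          IsKScalarMultiple v (e i)) := by
  obtain ⟨N, hN, hdisjN, hscalarN⟩ := ((eventually_ne_atTop 0).and <|
    (eventually_all.2 fun i => eventually_disjointOrEqual_of_congr σ₁ F hF (hdisj i)).and <|
      eventually_all.2 fun i => eventually_isKScalarMultiple_of_congr v (e i)).exists
  have := finite_quotient_span_natCast (K := K) hN
  have := finiteIndex_principalCongruenceSubgroup (n := Fin m) (Ideal.span {(N : 𝓞 K)})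
  refine ⟨(principalCongruenceSubgroup (Fin m) (Ideal.span {(N : 𝓞 K)})).subgroupOf _,
    inferInstance, fun h hh i => ?_⟩
  have hcongr (t : Fin m) : (N : 𝓞 K) ∣ (h : GL (Fin m) (𝓞 K)).val.mulVec v t - v t :=
    Ideal.mem_span_singleton.mp <| mulVec_sub_mem_of_mem_principalCongruenceSubgroup
      (Subgroup.mem_subgroupOf.mp hh) v t
  exact ⟨hdisjN i _ hcongr (bilinForm_mulVec_mulVec F h v v), hscalarN i _ hcongr⟩

end LargeLevel

/-- **Generalised Margulis–Vinberg lemma** (non-strict form).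
Let `K` be a totally real number field with real embeddings `σ 0, …, σ (d-1)` (the family
`σ` enumerates all of them without repetition and every complex embedding of `K` factors
through one of them), with distinguished embedding `σ j₁`; positivity of elements of `K`
refers to images under `σ j₁`.  Let `F` be a symmetric matrix over `𝓞 K` of size `n+1`,
`n ≥ 2`, such that `σ j (F)` is positive definite for all `j ≠ j₁`.  Suppose
`e 0, …, e k ∈ 𝓞 K^{n+1}` satisfy `B(eᵢ,eᵢ) > 0` and, for `i ≠ j`,
`B(eᵢ,eⱼ)² ≥ B(eᵢ,eᵢ)·B(eⱼ,eⱼ)` with `eᵢ` not a `K`-scalar multiple of `eⱼ` (so the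
hyperbolic hyperplanes they define are pairwise disjoint).  Then there is a finite-index
subgroup `Γ'` of `O_F(𝓞 K)` such that every `h ∈ Γ'` maps the hyperplane of `e 0` either
to itself or to a hyperplane disjoint from all the given ones. -/
theorem generalized_margulis_vinberg
    (K : Type*) [Field K] [NumberField K]
    (d : ℕ) (σ : Fin d → (K →+* ℝ))
    (hσinj : Function.Injective σ)
    (hσall : ∀ τ : K →+* ℝ, ∃ j : Fin d, τ = σ j)
    (htotreal : ∀ φ : K →+* ℂ, ∃ j : Fin d, φ = Complex.ofRealHom.comp (σ j))
    (j₁ : Fin d)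
    (n : ℕ) (hn : 2 ≤ n)
    (F : Matrix (Fin (n + 1)) (Fin (n + 1)) (NumberField.RingOfIntegers K))
    (hFsymm : F.IsSymm)
    (hFpos : ∀ j : Fin d, j ≠ j₁ → (F.map (embOK (σ j))).PosDef)
    (k : ℕ) (e : Fin (k + 1) → (Fin (n + 1) → NumberField.RingOfIntegers K))
    (hpos : ∀ i, 0 < embOK (σ j₁) (bilinForm F (e i) (e i)))
    (hdisj : ∀ i j, i ≠ j →
      (embOK (σ j₁) (bilinForm F (e i) (e j))) ^ 2 ≥
        embOK (σ j₁) (bilinForm F (e i) (e i)) *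
          embOK (σ j₁) (bilinForm F (e j) (e j)))
    (hprop : ∀ i j, i ≠ j → ¬ IsKScalarMultiple (e i) (e j)) :
    ∃ Γ' : Subgroup (orthogonalSubgroup F),
      Γ'.index ≠ 0 ∧
      ∀ h : orthogonalSubgroup F, h ∈ Γ' →
        IsKScalarMultiple
          (((h : GL (Fin (n + 1)) (NumberField.RingOfIntegers K)) :
              Matrix (Fin (n + 1)) (Fin (n + 1)) (NumberField.RingOfIntegers K)).mulVec
            (e 0)) (e 0) ∨
        ∀ i : Fin (k + 1),
          (embOK (σ j₁) (bilinForm F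
              (((h : GL (Fin (n + 1)) (NumberField.RingOfIntegers K)) :
                  Matrix (Fin (n + 1)) (Fin (n + 1)) (NumberField.RingOfIntegers K)).mulVec
                (e 0)) (e i))) ^ 2 ≥
            embOK (σ j₁) (bilinForm F
              (((h : GL (Fin (n + 1)) (NumberField.RingOfIntegers K)) :
                  Matrix (Fin (n + 1)) (Fin (n + 1)) (NumberField.RingOfIntegers K)).mulVec
                (e 0))
              (((h : GL (Fin (n + 1)) (NumberField.RingOfIntegers K)) :
                  Matrix (Fin (n + 1)) (Fin (n + 1)) (NumberField.RingOfIntegers K)).mulVec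
                (e 0))) *
              embOK (σ j₁) (bilinForm F (e i) (e i)) ∧
          ¬ IsKScalarMultiple
            (((h : GL (Fin (n + 1)) (NumberField.RingOfIntegers K)) :
                Matrix (Fin (n + 1)) (Fin (n + 1)) (NumberField.RingOfIntegers K)).mulVec
              (e 0)) (e i) := by
  have := isTotallyReal_of_forall_embedding_factors fun φ => (htotreal φ).imp' σ fun _ => id
  have hF : ∀ τ : K →+* ℝ, τ ≠ σ j₁ → (F.map (embOK τ)).PosSemidef := fun τ hτ => by
    obtain ⟨j, rfl⟩ := hσall τ
    exact (hFpos j (ne_of_apply_ne σ hτ)).posSemidef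
  have hdisj₀ : ∀ i, DisjointOrEqual (embOK (σ j₁)) F (e 0) (e i) := fun i => by
    rcases eq_or_ne 0 i with rfl | hi
    · exact (sq _).ge
    · exact hdisj 0 i hi
  obtain ⟨Γ', hΓ', hΓ'e⟩ := generalized_margulis_vinberg_general (σ j₁) F hF (e 0) e hdisj₀
  refine ⟨Γ', hΓ'.index_ne_zero, fun h hh => or_iff_not_imp_left.mpr fun hself i => ?_⟩
  refine ⟨(hΓ'e h hh i).1, fun hi => ?_⟩
  rcases eq_or_ne 0 i with rfl | hne
  · exact hself hi
  · exact hprop 0 i hne ((hΓ'e h hh i).2 hi)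

end
end

section
/- Fix n ≥ 2 and let F = diag(−√5, 1, …, 1) be the real diagonal (n+1)×(n+1) matrix of the quadratic form f = −√5·x₀² + x₁² + ⋯ + x_n². For each integer i ≥ 1, let A_i be the real (n+1)×(n+1) matrix with (A_i)₀₀ = (A_i)_{nn} = (i²+√5)/(i²−√5), (A_i)_{0n} = −2i/(i²−√5), (A_i)_{n0} = −2i√5/(i²−√5), (A_i)_{jj} = 1 for 1 ≤ j ≤ n−1, and all other entries equal to 0. Then A_iᵀ F A_i = F, i.e. A_i lies in the real orthogonal group of the form f. -/
open scoped Matrix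

/-!
Put `r = √5`, and let `ω` be a formal square root of `r`. Identify the plane of the coordinates `x₀`
and `xₙ` with `ℝ[ω]` by `(x₀, xₙ) ↦ xₙ + x₀ ω`. The restriction of `f` to this plane is the norm
form `xₙ² - r x₀²`, and `A` acts on it as multiplication by
`((i² + r) - 2iω) / (i² - r) = (i - ω) / (i + ω)`. This is a quotient of conjugates, so it has norm
`1`, and multiplication by it preserves the norm form. On the other coordinates `A` is the identity.
-/

section CoordinateInclusion

variable {ι m R : Type*} [DecidableEq ι] [CommSemiring R]

/-- The matrix of the linear map `(m → R) → (ι → R)` sending the `k`-th basis vector to the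
`f k`-th one. -/
def coordInclusion (R : Type*) [CommSemiring R] (f : m → ι) : Matrix ι m R :=
  (1 : Matrix ι ι R).submatrix id f

theorem coordInclusion_apply (f : m → ι) (i : ι) (k : m) :
    coordInclusion R f i k = if i = f k then 1 else 0 :=
  Matrix.one_apply

theorem transpose_coordInclusion_mul_self [Fintype ι] [DecidableEq m] {f : m → ι}
    (hf : Function.Injective f) : (coordInclusion R f)ᵀ * coordInclusion R f = 1 := by
  ext k l
  simp [Matrix.mul_apply, coordInclusion_apply, Matrix.one_apply, hf.eq_iff, eq_comm]

theorem diagonal_mul_coordInclusion [Fintype ι] [Fintype m] [DecidableEq m] (f : m → ι)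
    (d : ι → R) :
    Matrix.diagonal d * coordInclusion R f = coordInclusion R f * Matrix.diagonal (d ∘ f) := by
  ext i k
  by_cases h : i = f k <;> simp [coordInclusion_apply, h]

theorem transpose_coordInclusion_mul_diagonal [Fintype ι] [Fintype m] [DecidableEq m] (f : m → ι)
    (d : ι → R) :
    (coordInclusion R f)ᵀ * Matrix.diagonal d =
      Matrix.diagonal (d ∘ f) * (coordInclusion R f)ᵀ := by
  simpa using congrArg Matrix.transpose (diagonal_mul_coordInclusion f d)

end CoordinateInclusion

section IdentityExtension

variable {ι m R : Type*} [DecidableEq ι] [Fintype m] [DecidableEq m] [CommRing R]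

/-- For injective `f`, the extension of `M` to a matrix indexed by `ι` that acts as `M` on the
coordinates in the range of `f` and as the identity on the others. The closed formula avoids
splitting `ι` into the range of `f` and its complement. -/
def identityExtension (f : m → ι) (M : Matrix m m R) : Matrix ι ι R :=
  1 + coordInclusion R f * (M - 1) * (coordInclusion R f)ᵀ

theorem transpose_identityExtension (f : m → ι) (M : Matrix m m R) :
    (identityExtension f M)ᵀ = identityExtension f Mᵀ := by
  simp [identityExtension, Matrix.mul_assoc]

theorem transpose_identityExtension_mul_diagonal_mul_self [Fintype ι] {f : m → ι}
    (hf : Function.Injective f) {d : ι → R} {M : Matrix m m R}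
    (hM : Mᵀ * Matrix.diagonal (d ∘ f) * M = Matrix.diagonal (d ∘ f)) :
    (identityExtension f M)ᵀ * Matrix.diagonal d * identityExtension f M = Matrix.diagonal d := by
  rw [transpose_identityExtension, identityExtension, identityExtension]
  set J := coordInclusion R f
  set D := Matrix.diagonal d
  set E := Matrix.diagonal (d ∘ f)
  have hJ : Jᵀ * J = 1 := transpose_coordInclusion_mul_self hf
  have hDJ : D * J = J * E := diagonal_mul_coordInclusion f d
  have hJD : Jᵀ * D = E * Jᵀ := transpose_coordInclusion_mul_diagonal f d
  calc (1 + J * (Mᵀ - 1) * Jᵀ) * D * (1 + J * (M - 1) * Jᵀ)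
      = D + J * (Mᵀ - 1) * (Jᵀ * D) + (D * J) * (M - 1) * Jᵀ
          + J * (Mᵀ - 1) * (Jᵀ * (D * J)) * (M - 1) * Jᵀ := by
        simp only [Matrix.mul_add, Matrix.add_mul, Matrix.mul_one, Matrix.one_mul,
          Matrix.mul_assoc]
        abel
    _ = D + J * (Mᵀ - 1) * (E * Jᵀ) + (J * E) * (M - 1) * Jᵀ
          + J * (Mᵀ - 1) * E * (M - 1) * Jᵀ := by
        rw [hJD, hDJ, ← Matrix.mul_assoc Jᵀ, hJ, Matrix.one_mul]
    _ = D + J * (Mᵀ * E * M - E) * Jᵀ := by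
        simp only [Matrix.mul_sub, Matrix.sub_mul, Matrix.mul_one, Matrix.mul_assoc]
        abel
    _ = D := by rw [hM, sub_self, Matrix.mul_zero, Matrix.zero_mul, add_zero]

theorem identityExtension_pair_apply {a b : ι} (hab : a ≠ b) (p q t u : R) (i j : ι) :
    identityExtension ![a, b] !![p, q; t, u] i j =
      if i = a ∧ j = a then p
      else if i = a ∧ j = b then q
      else if i = b ∧ j = a then t
      else if i = b ∧ j = b then u
      else if i = j then 1 else 0 := by
  have hba := hab.symm
  by_cases hia : i = a <;> by_cases hib : i = b <;>
    by_cases hja : j = a <;> by_cases hjb : j = b <;>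
    simp_all [identityExtension, Matrix.mul_apply, coordInclusion_apply, Matrix.one_apply]

end IdentityExtension

theorem transpose_mul_normForm_mul_eq_norm_smul {R : Type*} [CommRing R] (r c s : R) :
    !![c, s; r * s, c]ᵀ * Matrix.diagonal ![-r, 1] * !![c, s; r * s, c] =
      (c ^ 2 - r * s ^ 2) • Matrix.diagonal ![-r, 1] := by
  ext k l
  fin_cases k <;> fin_cases l <;> simp [Matrix.mul_apply, Fin.sum_univ_two] <;> ring

theorem norm_conj_quotient_eq_one {K : Type*} [Field K] {r x : K} (hx : x ^ 2 ≠ r) :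
    ((x ^ 2 + r) / (x ^ 2 - r)) ^ 2 - r * (-2 * x / (x ^ 2 - r)) ^ 2 = 1 := by
  have hd : x ^ 2 - r ≠ 0 := sub_ne_zero.mpr hx
  field_simp
  ring

theorem matrix_preserves_form_general {K ι : Type*} [Field K] [Fintype ι] [DecidableEq ι]
    {a b : ι} (hab : a ≠ b) {r x : K} (hx : x ^ 2 ≠ r)
    (F : Matrix ι ι K) (hF : F = Matrix.diagonal (fun j => if j = a then -r else 1))
    (A : Matrix ι ι K)
    (hA : A = fun s t =>
      if s = a ∧ t = a then (x ^ 2 + r) / (x ^ 2 - r)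
      else if s = a ∧ t = b then (-2 * x) / (x ^ 2 - r)
      else if s = b ∧ t = a then (-2 * x * r) / (x ^ 2 - r)
      else if s = b ∧ t = b then (x ^ 2 + r) / (x ^ 2 - r)
      else if s = t then 1 else 0) :
    Aᵀ * F * A = F := by
  set c := (x ^ 2 + r) / (x ^ 2 - r)
  set s := -2 * x / (x ^ 2 - r)
  have hrs : -2 * x * r / (x ^ 2 - r) = r * s := by ring
  have hA_ext : A = identityExtension ![a, b] !![c, s; r * s, c] := by
    ext i j
    rw [hA, identityExtension_pair_apply hab, hrs]
  have hF_pair : (fun j => if j = a then -r else 1) ∘ ![a, b] = ![-r, 1] := by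
    ext k
    fin_cases k <;> simp [hab.symm]
  have hinj : Function.Injective ![a, b] := by
    simpa [Function.Injective, Fin.forall_fin_two] using ⟨hab, hab.symm⟩
  rw [hF, hA_ext]
  apply transpose_identityExtension_mul_diagonal_mul_self hinj
  rw [hF_pair, transpose_mul_normForm_mul_eq_norm_smul, norm_conj_quotient_eq_one hx, one_smul]

/-- Fix `n ≥ 2` and let `F = diag(−√5, 1, …, 1)` be the matrix of the quadratic form
`f = −√5·x₀² + x₁² + ⋯ + x_n²` on `ℝ^{n+1}`.  For an integer `i ≥ 1`, the matrix `A`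
with `A₀₀ = A_nn = (i²+√5)/(i²−√5)`, `A_{0n} = −2i/(i²−√5)`, `A_{n0} = −2i√5/(i²−√5)`,
`A_jj = 1` for `1 ≤ j ≤ n−1` and all other entries `0`, satisfies `Aᵀ F A = F`,
i.e. `A` lies in the real orthogonal group of the form `f`. -/
theorem matrix_preserves_form
    (n : ℕ) (hn : 2 ≤ n) (i : ℕ) (hi : 1 ≤ i)
    (F : Matrix (Fin (n + 1)) (Fin (n + 1)) ℝ)
    (hF : F = Matrix.diagonal (fun j => if j = 0 then -Real.sqrt 5 else 1))
    (A : Matrix (Fin (n + 1)) (Fin (n + 1)) ℝ)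
    (hA : A = fun s t =>
      if s = 0 ∧ t = 0 then ((i : ℝ) ^ 2 + Real.sqrt 5) / ((i : ℝ) ^ 2 - Real.sqrt 5)
      else if s = 0 ∧ t = Fin.last n then (-2 * (i : ℝ)) / ((i : ℝ) ^ 2 - Real.sqrt 5)
      else if s = Fin.last n ∧ t = 0 then
        (-2 * (i : ℝ) * Real.sqrt 5) / ((i : ℝ) ^ 2 - Real.sqrt 5)
      else if s = Fin.last n ∧ t = Fin.last n then
        ((i : ℝ) ^ 2 + Real.sqrt 5) / ((i : ℝ) ^ 2 - Real.sqrt 5)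
      else if s = t then 1 else 0) :
    Aᵀ * F * A = F := by
  have hn₀ : NeZero n := ⟨by omega⟩
  have hi₅ : (i : ℝ) ^ 2 ≠ √5 := mod_cast (Nat.prime_five.irrational_sqrt.ne_nat (i ^ 2)).symm
  exact matrix_preserves_form_general Fin.last_pos'.ne hi₅ F hF A hA
end

section
/- Fix n ≥ 2 and let B(u,v) = −√5·u₀v₀ + u₁v₁ + ⋯ + u_n v_n be the real bilinear form of the quadratic form f = −√5·x₀² + x₁² + ⋯ + x_n². For an integer i ≥ 1, let e₀ = (0, 0, …, 0, i²−√5) and e₁ = (−2i, 0, …, 0, i²+√5) in ℝ^{n+1}. Then B(e₀, e₁) = i⁴ − 5, B(e₀, e₀) = B(e₁, e₁) = (i²−√5)² > 0, and B(e₀,e₁)² > B(e₀,e₀)·B(e₁,e₁), so the hyperplanes in hyperbolic n-space defined by e₀ and e₁ are disjoint and do not meet at infinity. -/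
open scoped Matrix

/-!
Only the coordinates `0` and `n` of `e₀` and `e₁` are nonzero, so every value of the form is a sum
of two terms. With `s = √5` and `x = i`, the identity `(x² + s)² - 4sx² = (x² - s)²` makes the two
norms equal, and `B(e₀, e₁) = (x² - s)(x² + s)`. The inequality is thus
`(x² - s)² < (x² + s)²` multiplied by `(x² - s)²`, which is nonzero because `√5` is irrational.
-/

lemma dotProduct_diagonal_mulVec_eq_add {ι R : Type*} [Fintype ι] [DecidableEq ι]
    [NonUnitalNonAssocSemiring R] (w : ι → R) {u : ι → R} (v : ι → R) {p q : ι} (hpq : p ≠ q)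
    (hu : ∀ t, t ≠ p ∧ t ≠ q → u t = 0) :
    u ⬝ᵥ (Matrix.diagonal w *ᵥ v) = u p * (w p * v p) + u q * (w q * v q) := by
  simp only [dotProduct, Matrix.mulVec_diagonal]
  exact Fintype.sum_eq_add p q hpq fun t ht => by rw [hu t ht, zero_mul]

section CommRing

variable {ι R : Type*} [Fintype ι] [DecidableEq ι] [CommRing R] {p q : ι}

/-- The bilinear form of `-s·x_p² + ∑ j ≠ p, x_j²`, whose signature is Lorentzian when `s > 0`.
The timelike coordinate `p` of an arbitrary index type plays the role of the index `0`. -/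
def lorentzForm (p : ι) (s : R) (u v : ι → R) : R :=
  u ⬝ᵥ (Matrix.diagonal (fun j => if j = p then -s else 1) *ᵥ v)

/-- The vector `e₀`, normal to the first hyperplane; `q` plays the role of the last index. -/
def firstNormal (q : ι) (s x : R) : ι → R :=
  fun t => if t = q then x ^ 2 - s else 0

/-- The vector `e₁`, normal to the second hyperplane; `p` and `q` play the roles of the indices
`0` and `n`. -/
def secondNormal (p q : ι) (s x : R) : ι → R :=
  fun t => if t = p then -2 * x else if t = q then x ^ 2 + s else 0

lemma lorentzForm_eq_of_support {u : ι → R} (s : R) (v : ι → R) (hpq : p ≠ q)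
    (hu : ∀ t, t ≠ p ∧ t ≠ q → u t = 0) :
    lorentzForm p s u v = -s * u p * v p + u q * v q := by
  rw [lorentzForm, dotProduct_diagonal_mulVec_eq_add _ v hpq hu, if_pos rfl, if_neg hpq.symm]
  ring

lemma lorentzForm_firstNormal (s x : R) (v : ι → R) (hpq : p ≠ q) :
    lorentzForm p s (firstNormal q s x) v = (x ^ 2 - s) * v q := by
  have hsupp : ∀ t, t ≠ p ∧ t ≠ q → firstNormal q s x t = 0 := fun t ht => if_neg ht.2
  rw [lorentzForm_eq_of_support s v hpq hsupp]
  simp [firstNormal, hpq]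

lemma lorentzForm_secondNormal (s x : R) (v : ι → R) (hpq : p ≠ q) :
    lorentzForm p s (secondNormal p q s x) v = 2 * s * x * v p + (x ^ 2 + s) * v q := by
  have hsupp : ∀ t, t ≠ p ∧ t ≠ q → secondNormal p q s x t = 0 :=
    fun t ht => (if_neg ht.1).trans (if_neg ht.2)
  rw [lorentzForm_eq_of_support s v hpq hsupp]
  simp only [secondNormal, if_true, if_neg hpq.symm]
  ring

lemma lorentzForm_firstNormal_secondNormal (s x : R) (hpq : p ≠ q) :
    lorentzForm p s (firstNormal q s x) (secondNormal p q s x) = x ^ 4 - s ^ 2 := by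
  rw [lorentzForm_firstNormal s x _ hpq, secondNormal, if_neg hpq.symm, if_pos rfl]
  ring

lemma lorentzForm_firstNormal_self (s x : R) (hpq : p ≠ q) :
    lorentzForm p s (firstNormal q s x) (firstNormal q s x) = (x ^ 2 - s) ^ 2 := by
  rw [lorentzForm_firstNormal s x _ hpq, firstNormal, if_pos rfl, ← sq]

lemma lorentzForm_secondNormal_self (s x : R) (hpq : p ≠ q) :
    lorentzForm p s (secondNormal p q s x) (secondNormal p q s x) = (x ^ 2 - s) ^ 2 := by
  rw [lorentzForm_secondNormal s x _ hpq]
  simp only [secondNormal, if_true, if_neg hpq.symm]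
  ring

end CommRing

section Ordered

variable {R : Type*} [CommRing R] [LinearOrder R] [IsStrictOrderedRing R]

lemma sq_sub_lt_sq_add_of_mul_pos {a b : R} (hab : 0 < a * b) : (a - b) ^ 2 < (a + b) ^ 2 := by
  linarith [add_sq a b, sub_sq a b]

theorem hyperplanes_disjoint_general {ι : Type*} [Fintype ι] [DecidableEq ι] {p q : ι}
    (hpq : p ≠ q) {s x : R} (hs : 0 < s) (hx : x ≠ 0) (hxs : x ^ 2 ≠ s) :
    let B := lorentzForm p s
    let e₀ := firstNormal q s x
    let e₁ := secondNormal p q s x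
    B e₀ e₁ = x ^ 4 - s ^ 2 ∧
    B e₀ e₀ = (x ^ 2 - s) ^ 2 ∧
    B e₁ e₁ = (x ^ 2 - s) ^ 2 ∧
    0 < (x ^ 2 - s) ^ 2 ∧
    (B e₀ e₁) ^ 2 > B e₀ e₀ * B e₁ e₁ := by
  intro B e₀ e₁
  have h₀₁ : B e₀ e₁ = x ^ 4 - s ^ 2 := lorentzForm_firstNormal_secondNormal s x hpq
  have h₀₀ : B e₀ e₀ = (x ^ 2 - s) ^ 2 := lorentzForm_firstNormal_self s x hpq
  have h₁₁ : B e₁ e₁ = (x ^ 2 - s) ^ 2 := lorentzForm_secondNormal_self s x hpq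
  have hpos : 0 < (x ^ 2 - s) ^ 2 := sq_pos_of_ne_zero (sub_ne_zero.mpr hxs)
  have hlt : (x ^ 2 - s) ^ 2 < (x ^ 2 + s) ^ 2 := sq_sub_lt_sq_add_of_mul_pos (by positivity)
  refine ⟨h₀₁, h₀₀, h₁₁, hpos, ?_⟩
  calc B e₀ e₀ * B e₁ e₁ = (x ^ 2 - s) ^ 2 * (x ^ 2 - s) ^ 2 := by rw [h₀₀, h₁₁]
    _ < (x ^ 2 - s) ^ 2 * (x ^ 2 + s) ^ 2 := mul_lt_mul_of_pos_left hlt hpos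
    _ = (B e₀ e₁) ^ 2 := by rw [h₀₁]; ring

end Ordered

/-- Fix `n ≥ 2` and let `B(u,v) = −√5·u₀v₀ + u₁v₁ + ⋯ + u_n v_n` be the bilinear form
of `f = −√5·x₀² + x₁² + ⋯ + x_n²`.  For an integer `i ≥ 1`, the vectors
`e₀ = (0, …, 0, i²−√5)` and `e₁ = (−2i, 0, …, 0, i²+√5)` satisfy
`B(e₀,e₁) = i⁴−5`, `B(e₀,e₀) = B(e₁,e₁) = (i²−√5)² > 0` and
`B(e₀,e₁)² > B(e₀,e₀)·B(e₁,e₁)`, so the hyperplanes in hyperbolic `n`-space they define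
are disjoint and do not meet at infinity. -/
theorem hyperplanes_disjoint
    (n : ℕ) (hn : 2 ≤ n) (i : ℕ) (hi : 1 ≤ i)
    (F : Matrix (Fin (n + 1)) (Fin (n + 1)) ℝ)
    (hF : F = Matrix.diagonal (fun j => if j = 0 then -Real.sqrt 5 else 1))
    (B : (Fin (n + 1) → ℝ) → (Fin (n + 1) → ℝ) → ℝ)
    (hB : B = fun u v => dotProduct u (F.mulVec v))
    (e₀ e₁ : Fin (n + 1) → ℝ)
    (he₀ : e₀ = fun t => if t = Fin.last n then (i : ℝ) ^ 2 - Real.sqrt 5 else 0)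
    (he₁ : e₁ = fun t =>
      if t = 0 then -2 * (i : ℝ)
      else if t = Fin.last n then (i : ℝ) ^ 2 + Real.sqrt 5 else 0) :
    B e₀ e₁ = (i : ℝ) ^ 4 - 5 ∧
    B e₀ e₀ = ((i : ℝ) ^ 2 - Real.sqrt 5) ^ 2 ∧
    B e₁ e₁ = ((i : ℝ) ^ 2 - Real.sqrt 5) ^ 2 ∧
    0 < ((i : ℝ) ^ 2 - Real.sqrt 5) ^ 2 ∧
    (B e₀ e₁) ^ 2 > B e₀ e₀ * B e₁ e₁ := by
  have hsqrt : (i : ℝ) ^ 2 ≠ √5 :=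
    mod_cast (Nat.prime_five.irrational_sqrt.ne_nat (i ^ 2)).symm
  have hends : (0 : Fin (n + 1)) ≠ Fin.last n := Fin.ne_of_val_ne (show 0 ≠ n by omega)
  have hi₀ : (i : ℝ) ≠ 0 := Nat.cast_ne_zero.mpr (by omega)
  subst hF hB he₀ he₁
  obtain ⟨h₀₁, h⟩ := hyperplanes_disjoint_general hends (by positivity) hi₀ hsqrt
  exact ⟨h₀₁.trans (by rw [Real.sq_sqrt (by norm_num)]), h⟩
end
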